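/- arXiv:2605.10742 — 2 statements merged into one kernel-verified Lean document; each statement's English description precedes it below -/
import Mathlib

section
/- Let H be a nontrivial complex Hilbert space and let A be a bounded positive operator on H. The following are equivalent: (1) the infimum over unit vectors x of Δ_x(A) equals 0; (2) the infimum over unit vectors x of re⟪A x, x⟫ equals 0; (3) there is a sequence (x_n) of unit vectors with re⟪A x_n, x_n⟫ → 0; (4) there is a sequence (x_n) of unit vectors with ‖A x_n‖ → 0; (5) 0 belongs to the spectrum of A; (6) A is not invertible in the algebra of bounded operators on H. -/
/-!
The Fujii–Seo determinants and the quadratic form of a positive operator `A` have the same infimum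
over the unit sphere. Jensen's inequality for `exp` gives `Δ_x(A) ≤ ⟪A x, x⟫`; conversely, a lower
bound `m ≤ ⟪A x, x⟫` over the unit sphere means `m • 1 ≤ A`, whence `m ≤ Δ_x(A)` because the
logarithm is operator monotone.

The quadratic form detects invertibility: if its infimum is positive, then `A` is coercive, hence
invertible; if it is zero, then `‖A x‖ ^ 2 ≤ ‖A‖ * ⟪A x, x⟫`, the Cauchy–Schwarz inequality for the
semi-inner product `⟪A x, y⟫`, turns a minimizing sequence into an approximate kernel vector, which
an invertible operator does not have.
-/

noncomputable section

open ContinuousLinearMap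

variable {H : Type*} [NormedAddCommGroup H] [InnerProductSpace ℂ H] [CompleteSpace H]

/-- The operator logarithm, defined via the continuous functional calculus. -/
def opLog (A : H →L[ℂ] H) : H →L[ℂ] H := cfc Real.log A

/-- The Fujii–Seo determinant `Δ_x(A) = exp (re⟪(log A) x, x⟫)` of a strictly positive
operator `A` at a vector `x`. -/
def fsDet (A : H →L[ℂ] H) (x : H) : ℝ :=
  Real.exp ((opLog A).reApplyInnerSelf x)

/-- The Fujii–Seo determinant of a (possibly non-invertible) positive operator,
defined as `⨅ ε > 0, Δ_x(A + ε • 1)`. -/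
def fsDet₀ (A : H →L[ℂ] H) (x : H) : ℝ :=
  ⨅ ε : {ε : ℝ // 0 < ε}, fsDet (A + (ε : ℝ) • 1) x

section Topology

open Filter Topology

lemma exists_seq_tendsto_iInf {α ι : Type*} [ConditionallyCompleteLinearOrder α]
    [TopologicalSpace α] [OrderTopology α] [FirstCountableTopology α] [Nonempty ι] {f : ι → α}
    (hf : BddBelow (Set.range f)) : ∃ x : ℕ → ι, Tendsto (f ∘ x) atTop (𝓝 (⨅ i, f i)) := by
  obtain ⟨u, -, hu, hmem⟩ := exists_seq_tendsto_sInf (Set.range_nonempty f) hf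
  choose x hx using hmem
  obtain rfl : f ∘ x = u := funext hx
  exact ⟨x, hu⟩

lemma tendsto_zero_of_isUnit_of_tendsto_apply {R M ι : Type*} [Semiring R] [AddCommMonoid M]
    [TopologicalSpace M] [Module R M] {T : M →L[R] M} (hT : IsUnit T) {x : ι → M} {l : Filter ι}
    (h : Tendsto (fun i => T (x i)) l (𝓝 0)) : Tendsto x l (𝓝 0) := by
  obtain ⟨S, hST⟩ := hT.exists_left_inv
  have hS (y : M) : S (T y) = y := DFunLike.congr_fun hST y
  simpa only [Function.comp_def, hS, map_zero] using (S.continuous.tendsto 0).comp h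

end Topology

section QuadraticForm

open scoped InnerProductSpace

variable {𝕜 E : Type*} [RCLike 𝕜] [NormedAddCommGroup E] [InnerProductSpace 𝕜 E]

lemma reApplyInnerSelf_add (S T : E →L[𝕜] E) (x : E) :
    (S + T).reApplyInnerSelf x = S.reApplyInnerSelf x + T.reApplyInnerSelf x := by
  simp only [reApplyInnerSelf_apply, add_apply, inner_add_left, map_add]

lemma reApplyInnerSelf_sub (S T : E →L[𝕜] E) (x : E) :
    (S - T).reApplyInnerSelf x = S.reApplyInnerSelf x - T.reApplyInnerSelf x := by
  simp only [reApplyInnerSelf_apply, sub_apply, inner_sub_left, map_sub]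

lemma reApplyInnerSelf_real_smul [Module ℝ (E →L[𝕜] E)] [IsScalarTower ℝ 𝕜 (E →L[𝕜] E)] (r : ℝ)
    (T : E →L[𝕜] E) (x : E) : (r • T).reApplyInnerSelf x = r * T.reApplyInnerSelf x := by
  rw [← algebraMap_smul 𝕜 r T, RCLike.algebraMap_eq_ofReal]
  simp only [reApplyInnerSelf_apply, smul_apply, inner_smul_left, RCLike.conj_ofReal,
    RCLike.re_ofReal_mul]

lemma reApplyInnerSelf_algebraMap [Algebra ℝ (E →L[𝕜] E)] [IsScalarTower ℝ 𝕜 (E →L[𝕜] E)] (r : ℝ)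
    (x : E) : (algebraMap ℝ (E →L[𝕜] E) r).reApplyInnerSelf x = r * ‖x‖ ^ 2 := by
  rw [Algebra.algebraMap_eq_smul_one, reApplyInnerSelf_real_smul, reApplyInnerSelf_apply,
    one_apply_eq_self, inner_self_eq_norm_sq]

lemma reApplyInnerSelf_le_of_le {S T : E →L[𝕜] E} (h : S ≤ T) (x : E) :
    S.reApplyInnerSelf x ≤ T.reApplyInnerSelf x := by
  rw [← sub_nonneg, ← reApplyInnerSelf_sub]
  exact h.2 x

lemma abs_reApplyInnerSelf_le (T : E →L[𝕜] E) (x : E) :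
    |T.reApplyInnerSelf x| ≤ ‖T‖ * ‖x‖ ^ 2 :=
  calc |T.reApplyInnerSelf x| ≤ ‖⟪T x, x⟫_𝕜‖ := RCLike.abs_re_le_norm _
    _ ≤ ‖T x‖ * ‖x‖ := norm_inner_le_norm _ _
    _ ≤ ‖T‖ * ‖x‖ * ‖x‖ := by gcongr; exact T.le_opNorm x
    _ = ‖T‖ * ‖x‖ ^ 2 := by ring

lemma bddBelow_range_reApplyInnerSelf (T : E →L[𝕜] E) :
    BddBelow (Set.range fun x : {x : E // ‖x‖ = 1} => T.reApplyInnerSelf (x : E)) := by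
  refine ⟨-‖T‖, Set.forall_mem_range.2 fun ⟨x, hx⟩ => neg_le_of_abs_le ?_⟩
  simpa only [hx, one_pow, mul_one] using abs_reApplyInnerSelf_le T x

lemma iInf_reApplyInnerSelf_mul_norm_sq_le (T : E →L[𝕜] E) (x : E) :
    (⨅ y : {y : E // ‖y‖ = 1}, T.reApplyInnerSelf (y : E)) * ‖x‖ ^ 2 ≤ T.reApplyInnerSelf x := by
  obtain rfl | hx := eq_or_ne x 0
  · simp [reApplyInnerSelf_apply]
  have hnorm : 0 < ‖x‖ := norm_pos_iff.2 hx
  have hle := ciInf_le (bddBelow_range_reApplyInnerSelf T)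
    ⟨(‖x‖ : 𝕜)⁻¹ • x, norm_smul_inv_norm hx⟩
  rwa [reApplyInnerSelf_smul, norm_inv, RCLike.norm_ofReal, abs_norm, inv_pow,
    le_inv_mul_iff₀' (pow_pos hnorm 2)] at hle

lemma isUnit_of_iInf_reApplyInnerSelf_pos [CompleteSpace E] {T : E →L[𝕜] E}
    (hT : 0 < ⨅ x : {x : E // ‖x‖ = 1}, T.reApplyInnerSelf (x : E)) : IsUnit T := by
  refine isUnit_of_forall_le_norm_inner_map T (c := ⟨_, hT.le⟩) hT fun x => ?_
  rw [mul_comm]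
  exact (iInf_reApplyInnerSelf_mul_norm_sq_le T x).trans (RCLike.re_le_norm _)

lemma isSymmetric_algebraMap_real [Algebra ℝ (E →L[𝕜] E)] [IsScalarTower ℝ 𝕜 (E →L[𝕜] E)]
    (r : ℝ) : (algebraMap ℝ (E →L[𝕜] E) r).IsSymmetric := by
  rw [Algebra.algebraMap_eq_smul_one, ← algebraMap_smul 𝕜 r, RCLike.algebraMap_eq_ofReal]
  exact LinearMap.IsSymmetric.one.smul (RCLike.conj_ofReal r)

lemma algebraMap_iInf_reApplyInnerSelf_le [Algebra ℝ (E →L[𝕜] E)]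
    [IsScalarTower ℝ 𝕜 (E →L[𝕜] E)] {T : E →L[𝕜] E} (hT : T.IsSymmetric) :
    algebraMap ℝ (E →L[𝕜] E) (⨅ x : {x : E // ‖x‖ = 1}, T.reApplyInnerSelf (x : E)) ≤ T := by
  refine ⟨hT.sub (isSymmetric_algebraMap_real _), fun x => ?_⟩
  rw [reApplyInnerSelf_sub, reApplyInnerSelf_algebraMap, sub_nonneg]
  exact iInf_reApplyInnerSelf_mul_norm_sq_le T x

lemma norm_inner_apply_sq_le {T : E →L[𝕜] E} (hT : T.IsPositive) (x y : E) :
    ‖⟪T x, y⟫_𝕜‖ ^ 2 ≤ T.reApplyInnerSelf x * T.reApplyInnerSelf y := by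
  have hsymm (u v : E) : ⟪T u, v⟫_𝕜 = ⟪u, T v⟫_𝕜 := hT.inner_left_eq_inner_right u v
  let core : PreInnerProductSpace.Core 𝕜 E :=
    { inner u v := ⟪T u, v⟫_𝕜
      conj_inner_symm u v := by rw [inner_conj_symm, hsymm]
      re_inner_nonneg := hT.2
      add_left u v w := by rw [map_add, inner_add_left]
      smul_left u v r := by rw [map_smul, inner_smul_left] }
  calc ‖⟪T x, y⟫_𝕜‖ ^ 2 = ‖⟪T x, y⟫_𝕜‖ * ‖⟪T y, x⟫_𝕜‖ := by
        rw [hsymm y, norm_inner_symm y, sq]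
    _ ≤ T.reApplyInnerSelf x * T.reApplyInnerSelf y :=
        InnerProductSpace.Core.inner_mul_inner_self_le (c := core) x y

lemma norm_apply_sq_le_opNorm_mul {T : E →L[𝕜] E} (hT : T.IsPositive) (x : E) :
    ‖T x‖ ^ 2 ≤ ‖T‖ * T.reApplyInnerSelf x := by
  obtain hTx | hTx := eq_or_ne (T x) 0
  · simp [reApplyInnerSelf_apply, hTx]
  refine le_of_mul_le_mul_right ?_ (pow_pos (norm_pos_iff.2 hTx) 2)
  calc ‖T x‖ ^ 2 * ‖T x‖ ^ 2 = ‖⟪T x, T x⟫_𝕜‖ ^ 2 := by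
        rw [inner_self_eq_norm_sq_to_K, norm_pow, RCLike.norm_ofReal, abs_norm]
        ring
    _ ≤ T.reApplyInnerSelf x * T.reApplyInnerSelf (T x) := norm_inner_apply_sq_le hT x (T x)
    _ ≤ T.reApplyInnerSelf x * (‖T‖ * ‖T x‖ ^ 2) := by
        gcongr
        · exact hT.2 x
        · exact (le_abs_self _).trans (abs_reApplyInnerSelf_le T (T x))
    _ = ‖T‖ * T.reApplyInnerSelf x * ‖T x‖ ^ 2 := by ring

open Filter Topology in
lemma tendsto_norm_apply_of_tendsto_reApplyInnerSelf {T : E →L[𝕜] E} (hT : T.IsPositive)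
    {ι : Type*} {l : Filter ι} {x : ι → E}
    (h : Tendsto (fun i => T.reApplyInnerSelf (x i)) l (𝓝 0)) :
    Tendsto (fun i => ‖T (x i)‖) l (𝓝 0) := by
  have hsq : Tendsto (fun i => ‖T (x i)‖ ^ 2) l (𝓝 0) :=
    squeeze_zero (fun i => by positivity) (fun i => norm_apply_sq_le_opNorm_mul hT (x i))
      (by simpa only [mul_zero] using h.const_mul ‖T‖)
  simpa only [Real.sqrt_sq (norm_nonneg _), Real.sqrt_zero] using hsq.sqrt

end QuadraticForm

section Determinant

lemma exp_smul_add_algebraMap_le_cfc_exp {A : Type*} [Ring A] [StarRing A] [TopologicalSpace A]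
    [Algebra ℝ A] [ContinuousFunctionalCalculus ℝ A IsSelfAdjoint] [PartialOrder A]
    [StarOrderedRing A] {a : A} (ha : IsSelfAdjoint a) (s : ℝ) :
    Real.exp s • (a + algebraMap ℝ A (1 - s)) ≤ cfc Real.exp a := by
  have hcfc : cfc (fun t => Real.exp s * (t + (1 - s))) a =
      Real.exp s • (a + algebraMap ℝ A (1 - s)) := by
    rw [cfc_const_mul _ _ a, cfc_add_const _ _ a, cfc_id' ℝ a]
  rw [← hcfc]
  refine cfc_mono fun t _ => ?_
  calc Real.exp s * (t + (1 - s)) ≤ Real.exp s * Real.exp (t - s) := by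
        gcongr
        linarith [Real.add_one_le_exp (t - s)]
    _ = Real.exp t := by rw [← Real.exp_add, add_sub_cancel]

lemma exp_reApplyInnerSelf_le {L : H →L[ℂ] H} (hL : IsSelfAdjoint L) {x : H} (hx : ‖x‖ = 1) :
    Real.exp (L.reApplyInnerSelf x) ≤ (cfc Real.exp L).reApplyInnerSelf x := by
  -- Jensen: the supporting line of `exp` at `s` has expectation exactly `exp s` in the state `x`.
  set s := L.reApplyInnerSelf x with hs
  calc Real.exp s = (Real.exp s • (L + algebraMap ℝ _ (1 - s))).reApplyInnerSelf x := by
        rw [reApplyInnerSelf_real_smul, reApplyInnerSelf_add, reApplyInnerSelf_algebraMap, hx, ← hs]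
        ring
    _ ≤ (cfc Real.exp L).reApplyInnerSelf x :=
        reApplyInnerSelf_le_of_le (exp_smul_add_algebraMap_le_cfc_exp hL s) x

lemma fsDet_le_reApplyInnerSelf {B : H →L[ℂ] H} (hB : IsStrictlyPositive B) {x : H}
    (hx : ‖x‖ = 1) : fsDet B x ≤ B.reApplyInnerSelf x := by
  have hlog : IsSelfAdjoint (CFC.log B) := .log
  have hexp : cfc Real.exp (CFC.log B) = B := by
    rw [CFC.real_exp_eq_normedSpace_exp hlog, CFC.exp_log B hB]
  calc fsDet B x ≤ (cfc Real.exp (CFC.log B)).reApplyInnerSelf x := exp_reApplyInnerSelf_le hlog hx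
    _ = B.reApplyInnerSelf x := by rw [hexp]

lemma fsDet_pos (B : H →L[ℂ] H) (x : H) : 0 < fsDet B x :=
  Real.exp_pos _

lemma le_fsDet {B : H →L[ℂ] H} {m : ℝ} (hB : algebraMap ℝ (H →L[ℂ] H) m ≤ B) {x : H}
    (hx : ‖x‖ = 1) : m ≤ fsDet B x := by
  obtain hm | hm := le_or_gt m 0
  · exact hm.trans (fsDet_pos B x).le
  have hlog : algebraMap ℝ (H →L[ℂ] H) (Real.log m) ≤ opLog B := by
    rw [← CFC.log_algebraMap]
    exact CFC.log_le_log hB (isStrictlyPositive_algebraMap hm)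
  have hle := reApplyInnerSelf_le_of_le hlog x
  rw [reApplyInnerSelf_algebraMap, hx, one_pow, mul_one] at hle
  exact (Real.log_le_iff_le_exp hm).1 hle

lemma fsDet₀_nonneg (A : H →L[ℂ] H) (x : H) : 0 ≤ fsDet₀ A x :=
  Real.iInf_nonneg fun _ => (fsDet_pos _ x).le

lemma fsDet₀_le_fsDet_add (A : H →L[ℂ] H) (x : H) {ε : ℝ} (hε : 0 < ε) :
    fsDet₀ A x ≤ fsDet (A + ε • 1) x :=
  ciInf_le ⟨0, Set.forall_mem_range.2 fun _ => (fsDet_pos _ x).le⟩ (⟨ε, hε⟩ : {ε : ℝ // 0 < ε})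

lemma fsDet₀_le_reApplyInnerSelf {A : H →L[ℂ] H} (hA : A.IsPositive) {x : H} (hx : ‖x‖ = 1) :
    fsDet₀ A x ≤ A.reApplyInnerSelf x := by
  refine le_of_forall_pos_le_add fun ε hε => ?_
  have hpos : IsStrictlyPositive (A + ε • 1) :=
    .nonneg_add ((nonneg_iff_isPositive A).2 hA) (.smul hε isStrictlyPositive_one)
  calc fsDet₀ A x ≤ fsDet (A + ε • 1) x := fsDet₀_le_fsDet_add A x hε
    _ ≤ (A + ε • 1).reApplyInnerSelf x := fsDet_le_reApplyInnerSelf hpos hx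
    _ = A.reApplyInnerSelf x + ε := by
        rw [reApplyInnerSelf_add, ← Algebra.algebraMap_eq_smul_one, reApplyInnerSelf_algebraMap, hx,
          one_pow, mul_one]

lemma le_fsDet₀ {A : H →L[ℂ] H} {m : ℝ} (hA : algebraMap ℝ (H →L[ℂ] H) m ≤ A) {x : H}
    (hx : ‖x‖ = 1) : m ≤ fsDet₀ A x := by
  have : Nonempty {ε : ℝ // 0 < ε} := ⟨⟨1, one_pos⟩⟩
  exact le_ciInf fun ε => le_fsDet
    (hA.trans (le_add_of_nonneg_right (smul_nonneg ε.2.le zero_le_one))) hx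

theorem iInf_fsDet₀_eq_iInf_reApplyInnerSelf [Nontrivial H] {A : H →L[ℂ] H} (hA : A.IsPositive) :
    ⨅ x : {x : H // ‖x‖ = 1}, fsDet₀ A (x : H) =
      ⨅ x : {x : H // ‖x‖ = 1}, A.reApplyInnerSelf (x : H) := by
  have : Nonempty {x : H // ‖x‖ = 1} := nonempty_subtype.2 (exists_norm_eq H zero_le_one)
  apply le_antisymm
  · exact ciInf_mono ⟨0, Set.forall_mem_range.2 fun x => fsDet₀_nonneg A x⟩
      fun x => fsDet₀_le_reApplyInnerSelf hA x.2
  · exact le_ciInf fun x => le_fsDet₀ (algebraMap_iInf_reApplyInnerSelf_le hA.isSymmetric) x.2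

end Determinant

/-- For a positive operator `A` on a nontrivial Hilbert space, the six
degeneracy conditions are equivalent. -/
theorem fujiiSeo_degeneracy_tfae [Nontrivial H] (A : H →L[ℂ] H) (hA : A.IsPositive) :
    List.TFAE
      [ (⨅ x : {x : H // ‖x‖ = 1}, fsDet₀ A (x : H)) = 0,
        (⨅ x : {x : H // ‖x‖ = 1}, A.reApplyInnerSelf (x : H)) = 0,
        ∃ x : ℕ → H, (∀ n, ‖x n‖ = 1) ∧
          Filter.Tendsto (fun n => A.reApplyInnerSelf (x n)) Filter.atTop (nhds 0),
        ∃ x : ℕ → H, (∀ n, ‖x n‖ = 1) ∧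
          Filter.Tendsto (fun n => ‖A (x n)‖) Filter.atTop (nhds 0),
        (0 : ℝ) ∈ spectrum ℝ A,
        ¬ IsUnit A ] := by
  have : Nonempty {x : H // ‖x‖ = 1} := nonempty_subtype.2 (exists_norm_eq H zero_le_one)
  tfae_have 1 ↔ 2 := by rw [iInf_fsDet₀_eq_iInf_reApplyInnerSelf hA]
  tfae_have 2 → 3 := fun h => by
    obtain ⟨x, hx⟩ := exists_seq_tendsto_iInf (bddBelow_range_reApplyInnerSelf A)
    exact ⟨fun n => x n, fun n => (x n).2, h ▸ hx⟩
  tfae_have 3 → 4 := fun ⟨x, hx, h⟩ => ⟨x, hx, tendsto_norm_apply_of_tendsto_reApplyInnerSelf hA h⟩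
  tfae_have 4 → 6 := fun ⟨x, hx, h⟩ hunit => by
    have hlim := (tendsto_zero_of_isUnit_of_tendsto_apply hunit
      (tendsto_zero_iff_norm_tendsto_zero.2 h)).norm
    simp [hx] at hlim
  tfae_have 6 → 2 := fun h => by
    have hnonneg : 0 ≤ ⨅ x : {x : H // ‖x‖ = 1}, A.reApplyInnerSelf (x : H) :=
      Real.iInf_nonneg fun x => hA.2 x
    exact (hnonneg.eq_or_lt.resolve_right fun hpos =>
      h (isUnit_of_iInf_reApplyInnerSelf_pos hpos)).symm
  tfae_have 5 ↔ 6 := spectrum.zero_mem_iff ℝ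
  tfae_finish
end
end

section
/- Let H be a complex Hilbert space, let A, B be strictly positive bounded operators on H, and suppose m·I ≤ B ≤ M·I for some 0 < m ≤ M; put h := M/m. If for every p > 0 one has S(h^p)·A^p ≥ B^p, where S(h) := (h−1)·h^{1/(h−1)}/(e·log h) for h > 1 and S(1) := 1 is Specht's ratio, then log A ≥ log B. -/
noncomputable section

open ContinuousLinearMap

variable {H : Type*} [NormedAddCommGroup H] [InnerProductSpace ℂ H] [CompleteSpace H]

/-- The operator power `A^p`, defined via the continuous functional calculus. -/
def opPow (A : H →L[ℂ] H) (p : ℝ) : H →L[ℂ] H := cfc (fun t : ℝ => t ^ p) A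

/-- Specht's ratio `S(h) = (h - 1) * h ^ (1 / (h - 1)) / (e * log h)` for `h ≠ 1`,
with `S(1) = 1`. -/
def spechtRatio (h : ℝ) : ℝ :=
  if h = 1 then 1 else (h - 1) * h ^ ((1 : ℝ) / (h - 1)) / (Real.exp 1 * Real.log h)

/-!
At `p = 0` the functions `p ↦ B ^ p` and `p ↦ S (h ^ p) • A ^ p` both equal `1`. Since
`S (exp t) = y * exp (y⁻¹ - 1)` with `y = (exp t - 1) / t`, the factor `S (h ^ p)` is constant to
first order, so the two functions have derivatives `log B` and `log A` at `0`; comparing their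
difference quotients from the right gives `log B ≤ log A`.
-/

open Filter
open scoped Topology

section Derivatives

theorem le_of_hasDerivWithinAt_of_frequently_le {E : Type*} [NormedAddCommGroup E]
    [NormedSpace ℝ E] [Preorder E] [IsOrderedAddMonoid E] [PosSMulMono ℝ E]
    [OrderClosedTopology E] {f g : ℝ → E} {f' g' : E} {x : ℝ}
    (hf : HasDerivWithinAt f f' (Set.Ioi x) x) (hg : HasDerivWithinAt g g' (Set.Ioi x) x)
    (hx : f x = g x) (hle : ∃ᶠ y in 𝓝[>] x, f y ≤ g y) : f' ≤ g' := by
  rw [hasDerivWithinAt_iff_tendsto_slope' Set.self_notMem_Ioi] at hf hg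
  refine le_of_tendsto_of_tendsto_of_frequently hf hg ?_
  refine (hle.and_eventually self_mem_nhdsWithin).mono fun y ⟨hy, hxy⟩ ↦ ?_
  simp only [slope_def_module, hx]
  exact smul_le_smul_of_nonneg_left (sub_le_sub_right hy _)
    (inv_nonneg.2 (sub_pos.2 hxy).le)

theorem differentiableAt_dslope_of_analyticAt {𝕜 E : Type*} [NontriviallyNormedField 𝕜]
    [NormedAddCommGroup E] [NormedSpace 𝕜 E] {f : 𝕜 → E} {x : 𝕜} (hf : AnalyticAt 𝕜 f x) :
    DifferentiableAt 𝕜 (dslope f x) x :=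
  let ⟨_, hp⟩ := hf
  hp.has_fpower_series_dslope_fslope.differentiableAt

end Derivatives

section SpechtRatio

theorem spechtRatio_one : spechtRatio 1 = 1 := if_pos rfl

theorem spechtRatio_exp (t : ℝ) :
    spechtRatio (Real.exp t) = dslope Real.exp 0 t * Real.exp ((dslope Real.exp 0 t)⁻¹ - 1) := by
  rcases eq_or_ne t 0 with rfl | ht
  · simp [spechtRatio_one]
  · have hexp : Real.exp t ≠ 1 := mt (Real.exp_eq_one_iff t).1 ht
    rw [spechtRatio, if_neg hexp, dslope_of_ne _ ht, slope_def_field, Real.exp_zero, sub_zero,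
      Real.log_exp, ← Real.exp_mul, inv_div, Real.exp_sub, mul_one_div]
    field_simp

-- `y ↦ y * exp (y⁻¹ - 1)` has a critical point at `y = 1`, the limit of `(exp t - 1) / t` at `0`.
theorem hasDerivAt_spechtRatio_exp_zero : HasDerivAt (fun t ↦ spechtRatio (Real.exp t)) 0 0 := by
  have hone : dslope Real.exp 0 0 = 1 := by simp
  have houter : HasDerivAt (fun y : ℝ ↦ y * Real.exp (y⁻¹ - 1)) 0 (dslope Real.exp 0 0) := by
    rw [hone]
    simpa using (hasDerivAt_id' (1 : ℝ)).fun_mul ((hasDerivAt_inv one_ne_zero).sub_const 1).exp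
  have hinner := (differentiableAt_dslope_of_analyticAt (analyticAt_rexp (x := 0))).hasDerivAt
  simpa only [funext spechtRatio_exp, Function.comp_def, zero_mul] using houter.comp 0 hinner

theorem hasDerivAt_spechtRatio_rpow_zero {h : ℝ} (hh : 0 < h) :
    HasDerivAt (fun p : ℝ ↦ spechtRatio (h ^ p)) 0 0 := by
  have hlin : HasDerivAt (fun p ↦ Real.log h * p) (Real.log h) 0 := hasDerivAt_const_mul _
  have hexp : HasDerivAt (fun t ↦ spechtRatio (Real.exp t)) 0 (Real.log h * 0) := by
    simpa only [mul_zero] using hasDerivAt_spechtRatio_exp_zero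
  simpa only [Real.rpow_def_of_pos hh, Function.comp_def, zero_mul] using hexp.comp 0 hlin

end SpechtRatio

section CStarAlgebra

variable {𝒜 : Type*} [CStarAlgebra 𝒜] [PartialOrder 𝒜] [StarOrderedRing 𝒜]

theorem rpow_eq_exp_smul_log {a : 𝒜} (ha : IsStrictlyPositive a) (p : ℝ) :
    a ^ p = NormedSpace.exp (p • CFC.log a) := by
  have hlog : ContinuousOn Real.log (spectrum ℝ a) := by fun_prop (disch := grind)
  rw [CFC.rpow_eq_cfc_real ha.nonneg, ← CFC.real_exp_eq_normedSpace_exp, CFC.log,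
    ← cfc_smul p Real.log a hlog, ← cfc_comp' Real.exp (fun x ↦ p • Real.log x) a]
  refine cfc_congr fun x hx ↦ ?_
  have hx : 0 < x := by grind
  simp only [Real.rpow_def_of_pos hx, smul_eq_mul, mul_comm]

theorem hasDerivAt_rpow {a : 𝒜} (ha : IsStrictlyPositive a) (p : ℝ) :
    HasDerivAt (fun q : ℝ ↦ a ^ q) (a ^ p * CFC.log a) p := by
  simpa only [rpow_eq_exp_smul_log ha] using hasDerivAt_exp_smul_const (CFC.log a) p

theorem hasDerivAt_rpow_zero {a : 𝒜} (ha : IsStrictlyPositive a) :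
    HasDerivAt (fun p : ℝ ↦ a ^ p) (CFC.log a) 0 := by
  simpa only [CFC.rpow_zero a ha.nonneg, one_mul] using hasDerivAt_rpow ha 0

theorem strong_kantorovich_implies_chaotic_order_general {a b : 𝒜} (ha : IsStrictlyPositive a)
    (hb : IsStrictlyPositive b) {h : ℝ} (hh : 0 < h)
    (hle : ∃ᶠ p : ℝ in 𝓝[>] 0, b ^ p ≤ spechtRatio (h ^ p) • a ^ p) :
    CFC.log b ≤ CFC.log a := by
  have hright : HasDerivAt (fun p : ℝ ↦ spechtRatio (h ^ p) • a ^ p) (CFC.log a) 0 := by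
    simpa [spechtRatio_one] using
      (hasDerivAt_spechtRatio_rpow_zero hh).fun_smul (hasDerivAt_rpow_zero ha)
  refine le_of_hasDerivWithinAt_of_frequently_le (hasDerivAt_rpow_zero hb).hasDerivWithinAt
    hright.hasDerivWithinAt ?_ hle
  simp [CFC.rpow_zero a ha.nonneg, CFC.rpow_zero b hb.nonneg, spechtRatio_one]

end CStarAlgebra

theorem opPow_eq_rpow {A : H →L[ℂ] H} (hA : 0 ≤ A) (p : ℝ) : opPow A p = A ^ p :=
  (CFC.rpow_eq_cfc_real hA).symm

/-- The strong Kantorovich (Specht) inequality for all `p > 0` implies the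
chaotic order `log A ≥ log B`. -/
theorem strong_kantorovich_implies_chaotic_order
    (A B : H →L[ℂ] H) (m M : ℝ) (hm : 0 < m) (hmM : m ≤ M)
    (hA : A.IsPositive) (hAu : IsUnit A) (hB : B.IsPositive) (hBu : IsUnit B)
    (hlow : (B - m • 1).IsPositive) (hupp : (M • 1 - B).IsPositive)
    (hkant : ∀ p : ℝ, 0 < p →
      ((spechtRatio ((M / m) ^ p) • opPow A p) - opPow B p).IsPositive) :
    (opLog A - opLog B).IsPositive := by
  simp only [← ContinuousLinearMap.le_def] at hkant ⊢
  rw [← nonneg_iff_isPositive] at hA hB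
  refine strong_kantorovich_implies_chaotic_order_general (hAu.isStrictlyPositive hA)
    (hBu.isStrictlyPositive hB) (div_pos (hm.trans_le hmM) hm) (Eventually.frequently ?_)
  filter_upwards [self_mem_nhdsWithin] with p hp
  simpa only [opPow_eq_rpow hA, opPow_eq_rpow hB] using hkant p hp
end
end
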